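/- For all integers n ≥ 1 and 0 ≤ j ≤ n−1, the number of cyclic permutations σ of ℤ/nℤ with exactly j indices i ∈ ℤ/nℤ satisfying σ(i) = i+1 (equivalently, directed Hamilton cycles sharing exactly j arcs with the fixed directed cycle i ↦ i+1) equals C(n,j) · D(n−j), where for ν ≥ 1, D(ν) denotes the number of cyclic permutations τ of ℤ/νℤ with τ(i) ≠ i+1 for every i ∈ ℤ/νℤ. -/

import Mathlib

/-!
Let `c` be the shift `i ↦ i + 1`. It suffices to show that for each set `S` of `j < n` points,
exactly `D(n - j)` cyclic permutations `σ` agree with `c` precisely on `S`; summing over the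
`C(n, j)` sets `S` then gives the formula.

For this, `c` may be any cyclic permutation of any finite type, and the points of `S` are removed
one at a time. If `none ∈ S`, then `σ none = c none`, and passing from permutations of `Option β`
to their first-return maps on `β` (`Equiv.removeNone`) is a bijection from the permutations with
that value at `none` onto the permutations of `β`. It preserves and reflects being cyclic
(`full_removeNone_iff`), and since `σ` and its first-return map differ by the transposition of
`none` and `σ none = c none`, it preserves agreement with `c` at each remaining point
(`agree_removeNone_iff`). Once `S` is exhausted there remain `n - j` points, a cyclic permutation
on them, and the cyclic permutations which agree with it nowhere; conjugating to the shift of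
`ℤ/(n-j)ℤ`, they are counted by `D(n - j)`.
-/

open Finset
open scoped Classical

noncomputable section

/-- `D(ν)`: the number of cyclic permutations `τ` of `ℤ/νℤ` (single `ν`-cycles) with
`τ(i) ≠ i+1` for every `i`. -/
noncomputable def Dcyc : ℕ → ℕ
  | 0 => 0
  | (ν + 1) =>
    (Finset.univ.filter fun τ : Equiv.Perm (ZMod (ν + 1)) =>
      τ.IsCycle ∧ τ.support = Finset.univ ∧ ∀ i : ZMod (ν + 1), τ i ≠ i + 1).card

open Equiv Equiv.Perm

/-- A permutation with a single orbit. Unlike `IsCycle` together with full support, this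
includes the identity on a one-point type, so that it is stable under removal of points. -/
def Full {α : Type} (σ : Perm α) : Prop := ∀ x y, SameCycle σ x y

/-- The number of single-orbit permutations agreeing with `c` exactly on `S`. -/
def agreeCount {α : Type} [Fintype α] (c : Perm α) (S : Finset α) : ℕ :=
  (univ.filter fun σ : Perm α => Full σ ∧ ∀ x, σ x = c x ↔ x ∈ S).card

/-- A map that sends each step of `σ` into an orbit of `τ` sends orbits into orbits. -/
lemma sameCycle_map {α β : Type} [Finite α] {σ : Perm α} {τ : Perm β} (f : α → β)
    (h : ∀ y, SameCycle τ (f y) (f (σ y))) {x y : α} (hxy : SameCycle σ x y) :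
    SameCycle τ (f x) (f y) := by
  obtain ⟨k, rfl⟩ := hxy.exists_nat_pow_eq
  induction k with
  | zero => exact SameCycle.refl _ _
  | succ k ih =>
    rw [pow_succ', Perm.mul_apply]
    exact (ih ⟨k, rfl⟩).trans (h _)

lemma full_permCongr {α β : Type} [Finite α] (e : α ≃ β) {σ : Perm α} (h : Full σ) :
    Full (e.permCongr σ) := by
  intro x y
  have := sameCycle_map (τ := e.permCongr σ) e (fun y => ⟨1, by simp⟩) (h (e.symm x) (e.symm y))
  simpa using this

lemma full_permCongr_iff {α β : Type} [Finite α] (e : α ≃ β) {σ : Perm α} :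
    Full (e.permCongr σ) ↔ Full σ := by
  refine ⟨fun h => ?_, full_permCongr e⟩
  have : Finite β := Finite.of_equiv _ e
  have := full_permCongr e.symm h
  convert this
  ext x
  simp

lemma agreeCount_equiv {α β : Type} [Fintype α] [Fintype β] (e : α ≃ β) (c : Perm α)
    (S : Finset α) :
    agreeCount c S = agreeCount (e.permCongr c) (S.map e.toEmbedding) := by
  refine Finset.card_equiv e.permCongr fun σ => ?_
  simp only [mem_filter, mem_univ, true_and, full_permCongr_iff, Finset.mem_map_equiv,
    Equiv.permCongr_apply, EmbeddingLike.apply_eq_iff_eq]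
  exact and_congr_right fun _ => e.symm.forall_congr_right (q := fun x => σ x = c x ↔ x ∈ S) |>.symm

lemma Full.isCycle {α : Type} [Fintype α] [DecidableEq α] [Nontrivial α] {σ : Perm α} (h : Full σ) :
    σ.IsCycle ∧ σ.support = univ := by
  have hne : ∀ x, σ x ≠ x := by
    intro x hx
    obtain ⟨y, hy⟩ := exists_ne x
    exact hy ((h x y).eq_of_left hx).symm
  obtain ⟨x⟩ := (inferInstance : Nonempty α)
  exact ⟨⟨x, hne x, fun y _ => h x y⟩, by ext y; simp [hne]⟩

lemma isCycle_iff_full {α : Type} [Fintype α] [DecidableEq α] [Nontrivial α] {σ : Perm α} :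
    (σ.IsCycle ∧ σ.support = univ) ↔ Full σ := by
  refine ⟨fun ⟨h, hs⟩ x y => h.sameCycle ?_ ?_, Full.isCycle⟩ <;>
    simp [← Perm.mem_support, hs]

/-- A permutation is its first-return map followed by the transposition of `none` and its
image. -/
lemma some_removeNone {β : Type} (σ : Perm (Option β)) (x : β) :
    σ (some x) = swap none (σ none) (some (removeNone σ x)) := by
  conv_lhs => rw [← Equiv.Perm.decomposeOption.symm_apply_apply σ]
  rw [Equiv.Perm.decomposeOption_apply, Equiv.Perm.decomposeOption_symm_apply, Perm.mul_apply,
    optionCongr_apply, Option.map_some]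

lemma agree_removeNone_iff {β : Type} {σ c : Perm (Option β)} (h : σ none = c none) (x : β) :
    removeNone σ x = removeNone c x ↔ σ (some x) = c (some x) := by
  rw [some_removeNone σ, some_removeNone c, h]
  simp

lemma full_removeNone_iff {β : Type} [Finite β] {σ : Perm (Option β)} {b : β}
    (h : σ none = some b) : Full (removeNone σ) ↔ Full σ := by
  have hstep : ∀ x, (σ (some x) = some (removeNone σ x)) ∨
      (σ (some x) = none ∧ removeNone σ x = b) := by
    intro x
    have := some_removeNone σ x
    rw [h] at this
    by_cases hb : removeNone σ x = b
    · right
      rw [hb] at this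
      exact ⟨by simpa using this, hb⟩
    · left
      rw [this, swap_apply_of_ne_of_ne] <;> simp [hb]
  have hnb : SameCycle σ none (some b) := ⟨1, by simpa using h⟩
  constructor
  · intro hf
    have key : ∀ x y : β, SameCycle σ (some x) (some y) := by
      intro x y
      refine sameCycle_map some (fun z => ?_) (hf x y)
      have hz : SameCycle σ (some z) (σ (some z)) := ⟨1, by simp⟩
      rcases hstep z with h1 | ⟨h1, h2⟩
      · rwa [h1] at hz
      · rw [h1] at hz
        rw [h2]
        exact hz.trans hnb
    have key' : ∀ x, SameCycle σ (some b) x := by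
      rintro (_ | x)
      exacts [hnb.symm, key _ _]
    exact fun x y => (key' x).symm.trans (key' y)
  · intro hf x y
    -- The projection collapsing `none` to its successor carries steps of `σ` to steps, or to
    -- standing still, of the first-return map.
    refine sameCycle_map (τ := removeNone σ) (fun o : Option β => o.getD b) (fun z => ?_)
      (hf (some x) (some y))
    rcases z with _ | z
    · simpa [h] using SameCycle.refl _ _
    · refine ⟨1, ?_⟩
      rcases hstep z with h1 | ⟨h1, h2⟩
      · simp [h1]
      · simp [h1, h2]

lemma agreeCount_option {β : Type} [Fintype β] {c : Perm (Option β)} {b : β}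
    (hc : c none = some b) {S : Finset (Option β)} (hS : none ∈ S) :
    agreeCount c S = agreeCount (removeNone c) S.eraseNone := by
  refine Finset.card_bij (fun σ _ => removeNone σ) ?_ ?_ ?_
  · intro σ hσ
    simp only [mem_filter, mem_univ, true_and] at hσ ⊢
    have h0 : σ none = c none := (hσ.2 none).2 hS
    refine ⟨(full_removeNone_iff (h0.trans hc)).2 hσ.1, fun x => ?_⟩
    rw [agree_removeNone_iff h0, hσ.2, Finset.mem_eraseNone]
  · intro σ hσ τ hτ hστ
    simp only [mem_filter, mem_univ, true_and] at hσ hτ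
    have h0 : σ none = τ none := ((hσ.2 none).2 hS).trans ((hτ.2 none).2 hS).symm
    ext1 x
    rcases x with _ | x
    · exact h0
    · exact (agree_removeNone_iff h0 x).1 (by rw [hστ])
  · intro τ hτ
    simp only [mem_filter, mem_univ, true_and] at hτ
    obtain ⟨σ, hσ⟩ := Equiv.Perm.decomposeOption.surjective (c none, τ)
    simp only [Equiv.Perm.decomposeOption_apply, Prod.mk.injEq] at hσ
    obtain ⟨h0, rfl⟩ := hσ
    refine ⟨σ, ?_, rfl⟩
    simp only [mem_filter, mem_univ, true_and]
    refine ⟨(full_removeNone_iff (h0.trans hc)).1 hτ.1, ?_⟩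
    rintro (_ | x)
    · simp [h0, hS]
    · rw [← agree_removeNone_iff h0, hτ.2, Finset.mem_eraseNone]

lemma full_shift (n : ℕ) [NeZero n] : Full (Equiv.addRight (1 : ZMod n)) := by
  intro x y
  refine ⟨((y - x).val : ℤ), ?_⟩
  simp

/-- For one point both sides vanish: the only permutation agrees with the shift. -/
lemma agreeCount_shift (n : ℕ) [NeZero n] :
    agreeCount (Equiv.addRight (1 : ZMod n)) ∅ = Dcyc n := by
  obtain ⟨m, rfl⟩ := Nat.exists_eq_succ_of_ne_zero (NeZero.ne n)
  unfold agreeCount Dcyc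
  congr 1
  ext τ
  simp only [mem_filter, mem_univ, true_and]
  simp only [notMem_empty, iff_false, coe_addRight, ← and_assoc]
  refine and_congr_left fun h => ?_
  rcases m with _ | m
  · exact absurd (Subsingleton.elim (α := Fin 1) _ _) (h 0)
  · have : Fact (1 < (m + 1).succ) := ⟨by omega⟩
    exact (isCycle_iff_full (σ := τ)).symm

/-- Single-orbit permutations of one finite type are conjugate. -/
lemma exists_permCongr_eq {α : Type} [Fintype α] {c d : Perm α} (hc : Full c) (hd : Full d) :
    ∃ e : Perm α, e.permCongr c = d := by
  rcases subsingleton_or_nontrivial α with _ | _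
  · exact ⟨1, Subsingleton.elim _ _⟩
  · obtain ⟨hc1, hc2⟩ := hc.isCycle
    obtain ⟨hd1, hd2⟩ := hd.isCycle
    obtain ⟨e, he⟩ := isConj_iff.1 (hc1.isConj hd1 (by rw [hc2, hd2]))
    exact ⟨e, by rw [← he]; rfl⟩

/-- The count of single-orbit permutations with a prescribed agreement set of size `k` depends
only on the number of points outside that set. -/
lemma agreeCount_eq (k : ℕ) : ∀ {α : Type} [Fintype α] (c : Perm α) (_ : Full c)
    (S : Finset α), S.card = k → k < Fintype.card α →
    agreeCount c S = Dcyc (Fintype.card α - k) := by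
  induction k with
  | zero =>
    intro α _ c hc S hS hk
    have : NeZero (Fintype.card α) := ⟨hk.ne'⟩
    let e : α ≃ ZMod (Fintype.card α) := Fintype.equivOfCardEq (by rw [ZMod.card])
    obtain ⟨f, hf⟩ := exists_permCongr_eq (full_permCongr e hc) (full_shift _)
    rw [Finset.card_eq_zero.1 hS, agreeCount_equiv e, agreeCount_equiv f, hf, Finset.map_empty,
      Finset.map_empty, agreeCount_shift, Nat.sub_zero]
  | succ k ih =>
    intro α _ c hc S hS hk
    obtain ⟨s, hs⟩ : S.Nonempty := Finset.card_pos.1 (by omega)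
    let e : α ≃ Option {x // x ≠ s} := (Equiv.optionSubtypeNe s).symm
    have hcard : Fintype.card α = Fintype.card {x // x ≠ s} + 1 := by
      rw [Fintype.card_congr e, Fintype.card_option]
    have hs' : none ∈ S.map e.toEmbedding := by
      rw [Finset.mem_map_equiv]
      simpa [e] using hs
    have hfull := full_permCongr e hc
    obtain ⟨b, hb⟩ : ∃ b, e.permCongr c none = some b := by
      rw [← Option.ne_none_iff_exists']
      intro h0
      have : Nonempty {x // x ≠ s} := Fintype.card_pos_iff.1 (by omega)
      obtain ⟨z⟩ := this
      exact absurd ((hfull none (some z)).eq_of_left h0) (by simp)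
    rw [agreeCount_equiv e, agreeCount_option hb hs',
      ih _ ((full_removeNone_iff hb).2 hfull) _ ?_ (by omega), hcard, Nat.add_sub_add_right]
    rw [Finset.card_eraseNone_of_mem hs', Finset.card_map, hS, Nat.add_sub_cancel]

/-- **Formula for `f'_j(n)`.**  For `0 ≤ j ≤ n-1`, the number of cyclic permutations `σ`
of `ℤ/nℤ` with exactly `j` indices `i` satisfying `σ(i) = i+1` (i.e. directed Hamilton
cycles sharing exactly `j` arcs with the directed cycle `i ↦ i+1`) equals
`C(n,j) · D(n-j)`. -/
theorem shared_arcs_count (n j : ℕ) [NeZero n] (hj : j ≤ n - 1) :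
    (Finset.univ.filter fun σ : Equiv.Perm (ZMod n) =>
        σ.IsCycle ∧ σ.support = Finset.univ ∧
        (Finset.univ.filter fun i : ZMod n => σ i = i + 1).card = j).card =
      n.choose j * Dcyc (n - j) := by
  have hn : 0 < n := NeZero.pos n
  have hset : (Finset.univ.filter fun σ : Equiv.Perm (ZMod n) =>
        σ.IsCycle ∧ σ.support = Finset.univ ∧
        (Finset.univ.filter fun i : ZMod n => σ i = i + 1).card = j) =
      Finset.univ.filter fun σ : Equiv.Perm (ZMod n) => Full σ ∧
        (Finset.univ.filter fun i : ZMod n => σ i = i + 1).card = j := by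
    ext σ
    simp only [mem_filter, mem_univ, true_and, ← and_assoc]
    refine and_congr_left fun h => ?_
    by_cases h1 : n = 1
    · -- Here `j = 0`, but the only permutation of one point agrees with the shift.
      subst h1
      have h0 : (univ.filter fun i : ZMod 1 => σ i = i + 1).card = 0 := by omega
      have := Finset.card_eq_zero.1 h0
      have h2 := Finset.filter_eq_empty_iff.1 this (mem_univ 0)
      exact absurd (Subsingleton.elim (α := Fin 1) _ _) h2
    · have : Fact (1 < n) := ⟨by omega⟩
      exact isCycle_iff_full (σ := σ)
  rw [hset, Finset.card_eq_sum_card_fiberwise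
    (f := fun σ : Perm (ZMod n) => univ.filter fun i : ZMod n => σ i = i + 1)
    (t := powersetCard j univ)]
  · rw [Finset.sum_congr rfl (g := fun _ => Dcyc (n - j))]
    · simp [ZMod.card]
    · intro S hS
      rw [mem_powersetCard_univ] at hS
      have := agreeCount_eq j _ (full_shift n) S hS (by rw [ZMod.card]; omega)
      rw [ZMod.card] at this
      rw [← this]
      unfold agreeCount
      congr 1
      ext σ
      simp only [mem_filter, mem_univ, true_and]
      simp only [coe_addRight, Finset.ext_iff, mem_filter, mem_univ, true_and]
      refine ⟨fun h => ⟨h.1.1, h.2⟩, fun h => ⟨⟨h.1, ?_⟩, h.2⟩⟩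
      rw [← hS]
      congr 1
      ext x
      simpa using h.2 x
  · intro σ hσ
    simpa using (mem_filter.1 hσ).2.2
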